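/- Under the convexity assumptions $C_{-1} > 2C_0$, $C_{g-1} > 2C_g$, and $C_i + C_{i+2} > 2C_{i+1}$ for $i=0,\ldots,g-2$ (with $C_{g+1}:=0$), the tropical curve $\tilde\Gamma$ defined by $F(X,Y) = \min(2Y, Y + \min_{0\le i\le g+1}(C_i + iX'), C_{-1})$ is symmetric under the involution $\iota(X,Y) = (X, C_{-1}-Y)$: a point $P$ lies on $\tilde\Gamma$ if and only if $\iota(P)$ lies on $\tilde\Gamma$. -/

import Mathlib

open Finset

/-- The tropical polynomial `F` defining the spectral curve of the pBBS, with the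
convention `C (g+1) = 0`. -/
noncomputable def Ftrop (g : ℕ) (Cm1 : ℝ) (C : ℕ → ℝ) : ℝ × ℝ → ℝ :=
  fun p =>
    min (min (2 * p.2)
      (p.2 + (Finset.range (g + 2)).inf'
        (Finset.nonempty_range_iff.mpr (by omega)) (fun k => C k + k * p.1))) Cm1

/-!
Tropically, `F` is the quadratic polynomial `Y² + f(X) Y + c(X)` in `Y`. The product of its two
roots is `c`, so exchanging them is the map `Y ↦ c(X) - Y`. This map turns `2 Y` into `2 c(X) - 2 Y`
and hence exchanges the outer two terms of the minimum, up to adding `2 Y - c(X)` to all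
three terms. Where `c` is differentiable, so are the map and the added term, and therefore neither
affects whether `F` is differentiable.
-/

section HyperellipticInvolution

variable {E : Type*}

/-- The tropical polynomial `Y² + f(X) Y + c(X)`, as a function of `(X, Y)`. The
coefficients `f` and `c` are arbitrary functions. -/
noncomputable def tropicalQuadratic (f c : E → ℝ) (p : E × ℝ) : ℝ :=
  min (min (2 * p.2) (p.2 + f p.1)) (c p.1)

/-- The hyperelliptic involution of the tropical curve `Y² + f(X) Y + c(X)`. It is defined
on all of `E × ℝ`, not only on the curve. -/
noncomputable def hyperellipticInvolution (c : E → ℝ) (p : E × ℝ) : E × ℝ :=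
  (p.1, c p.1 - p.2)

theorem hyperellipticInvolution_involutive (c : E → ℝ) :
    Function.Involutive (hyperellipticInvolution c) :=
  fun p ↦ Prod.ext rfl (sub_sub_cancel (c p.1) p.2)

theorem tropicalQuadratic_hyperellipticInvolution_add (f c : E → ℝ) (p : E × ℝ) :
    tropicalQuadratic f c (hyperellipticInvolution c p) + (2 * p.2 - c p.1) =
      tropicalQuadratic f c p := by
  obtain ⟨x, y⟩ := p
  have outer_left : 2 * (c x - y) + (2 * y - c x) = c x := by ring
  have middle : c x - y + f x + (2 * y - c x) = y + f x := by ring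
  have outer_right : c x + (2 * y - c x) = 2 * y := by ring
  calc min (min (2 * (c x - y)) (c x - y + f x)) (c x) + (2 * y - c x)
      = min (min (c x) (y + f x)) (2 * y) := by
        rw [← min_add_add_right, ← min_add_add_right, outer_left, middle, outer_right]
    _ = min (min (2 * y) (y + f x)) (c x) := by
        rw [min_comm, min_comm (c x), min_assoc]

variable [NormedAddCommGroup E] [NormedSpace ℝ E] {c : E → ℝ} {p : E × ℝ}

theorem differentiableAt_hyperellipticInvolution (hc : DifferentiableAt ℝ c p.1) :
    DifferentiableAt ℝ (hyperellipticInvolution c) p :=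
  differentiableAt_fst.prodMk ((hc.comp p differentiableAt_fst).sub differentiableAt_snd)

theorem differentiableAt_tropicalQuadratic_of_hyperellipticInvolution {f : E → ℝ}
    (hc : DifferentiableAt ℝ c p.1)
    (h : DifferentiableAt ℝ (tropicalQuadratic f c) (hyperellipticInvolution c p)) :
    DifferentiableAt ℝ (tropicalQuadratic f c) p := by
  have shift : DifferentiableAt ℝ (fun q : E × ℝ ↦ 2 * q.2 - c q.1) p :=
    (differentiableAt_snd.const_mul 2).sub (hc.comp p differentiableAt_fst)
  rw [← funext (tropicalQuadratic_hyperellipticInvolution_add f c)]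
  exact (h.comp p (differentiableAt_hyperellipticInvolution hc)).add shift

theorem tropical_spectral_curve_symmetric_general (f : E → ℝ) (hc : DifferentiableAt ℝ c p.1) :
    ¬ DifferentiableAt ℝ (tropicalQuadratic f c) p ↔
      ¬ DifferentiableAt ℝ (tropicalQuadratic f c) (hyperellipticInvolution c p) := by
  refine not_congr ⟨fun h ↦ ?_, differentiableAt_tropicalQuadratic_of_hyperellipticInvolution hc⟩
  rw [← hyperellipticInvolution_involutive c p] at h
  exact differentiableAt_tropicalQuadratic_of_hyperellipticInvolution hc h

end HyperellipticInvolution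

theorem Ftrop_eq_tropicalQuadratic (g : ℕ) (Cm1 : ℝ) (C : ℕ → ℝ) :
    Ftrop g Cm1 C =
      tropicalQuadratic
        (fun X ↦ (range (g + 2)).inf' nonempty_range_add_one fun k ↦ C k + k * X)
        fun _ ↦ Cm1 :=
  rfl

/-- the tropical spectral curve is symmetric under the involution
`ι(X,Y) = (X, C₋₁ - Y)`: `P` is a non-differentiability point of `F` iff `ι(P)` is. -/
theorem tropical_spectral_curve_symmetric
    (g : ℕ) (Cm1 : ℝ) (C : ℕ → ℝ)
    (hCtop : C (g + 1) = 0)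
    (h1 : Cm1 > 2 * C 0)
    (h2 : C (g - 1) > 2 * C g)
    (h3 : ∀ i, i + 2 ≤ g → C i + C (i + 2) > 2 * C (i + 1)) :
    ∀ P : ℝ × ℝ,
      ¬ DifferentiableAt ℝ (Ftrop g Cm1 C) P ↔
      ¬ DifferentiableAt ℝ (Ftrop g Cm1 C) (P.1, Cm1 - P.2) := by
  rw [Ftrop_eq_tropicalQuadratic]
  exact fun _ ↦ tropical_spectral_curve_symmetric_general _ (differentiableAt_const Cm1)
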